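/- (Theorem 4, relation OOc = 2·OOb) Let n ≥ 1 and g ≥ 0. With U_g the set of genus-g elements of the coset U = β·C_ρ in S_{2n}, the number of equivalence classes of U_g under the equivalence relation generated by σ ≈ β²·σ·β⁻² is exactly twice the number of equivalence classes of U_g under the equivalence relation generated by σ ≈ β²·σ·β⁻² together with σ ≈ β⁻¹·ρ·σ⁻¹·β (swap). -/

import Mathlib

/-- The fixed-point-free involution of `Fin (2n)` pairing `2k` with `2k+1`. -/
def rho (n : ℕ) : Equiv.Perm (Fin (2 * n)) :=
  Function.Involutive.toPerm
    (fun x => ⟨if x.val % 2 = 0 then x.val + 1 else x.val - 1, by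
      have := x.isLt; split_ifs with h <;> omega⟩)
    (by
      intro x
      have hx := x.isLt
      apply Fin.ext
      dsimp only
      split_ifs <;> omega)

/-- The number of cycles of a permutation of `Fin (2n)`, counting fixed points. -/
def numCycles (n : ℕ) (x : Equiv.Perm (Fin (2 * n))) : ℕ :=
  Multiset.card x.cycleType + (2 * n - x.support.card)

/-- The genus-`g` part of the coset `U = β·C_ρ`. -/
def Ugen (n g : ℕ) : Set (Equiv.Perm (Fin (2 * n))) :=
  {σ | (∃ ξ ∈ Subgroup.centralizer {rho n}, σ = finRotate (2 * n) * ξ) ∧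
       numCycles n σ + numCycles n (σ * rho n) + 2 * g = n + 2}

/-- The number of equivalence classes of a set `s` of permutations under the smallest
equivalence relation identifying `σ` with `f σ` for every `f` in `F`. -/
noncomputable def numClasses (n : ℕ) (s : Set (Equiv.Perm (Fin (2 * n))))
    (F : Set (Equiv.Perm (Fin (2 * n)) → Equiv.Perm (Fin (2 * n)))) : ℕ :=
  Nat.card (Quot (fun a b : s => ∃ f ∈ F, (b : Equiv.Perm (Fin (2 * n))) = f a))

/-- Conjugation by `β²`. -/
def conjB2 (n : ℕ) : Equiv.Perm (Fin (2 * n)) → Equiv.Perm (Fin (2 * n)) :=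
  fun σ => finRotate (2 * n) ^ 2 * σ * (finRotate (2 * n) ^ 2)⁻¹

/-- The swap map `σ ↦ β⁻¹·ρ·σ⁻¹·β`. -/
def swapMap (n : ℕ) : Equiv.Perm (Fin (2 * n)) → Equiv.Perm (Fin (2 * n)) :=
  fun σ => (finRotate (2 * n))⁻¹ * rho n * σ⁻¹ * finRotate (2 * n)

/-- The mirror map `σ ↦ σ·ρ`. -/
def mirrorMap (n : ℕ) : Equiv.Perm (Fin (2 * n)) → Equiv.Perm (Fin (2 * n)) :=
  fun σ => σ * rho n

/-!
Write `σ = βξ` with `ξ` in the centralizer `C_ρ` and `b = β² ∈ C_ρ`. Conjugation by `β²` becomes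
`ξ ↦ bξb⁻¹` and the swap becomes `ξ ↦ b⁻¹ρξ⁻¹`, so the square of the swap is conjugation by `b⁻¹`.
The swap therefore induces an involution on the classes under conjugation, whose orbits are the
classes under both maps, and it remains to see that this involution has no fixed point.

A fixed class gives `b⁻¹ρξ⁻¹ = bᵏξb⁻ᵏ`, that is, `(b⁻ᵏξ)² = b^(-(2k+1))ρ`. View `C_ρ` as the group
of signed permutations of the `n` blocks `{2i, 2i+1}`: there `b` is an `n`-cycle without signs and
`ρ` is `-1`, so their determinants are `(-1)^(n-1)` and `(-1)^n`. An odd power of `b` times `ρ` then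
has determinant `-1` and is not a square.
-/

open Equiv

section Counting

variable {α : Type*}

theorem quot_mk_eq_iff_of_involutive {f : α → α} (hf : f.Involutive) {a b : α} :
    Quot.mk (fun x y => y = f x) a = Quot.mk (fun x y => y = f x) b ↔ a = b ∨ a = f b := by
  constructor
  · intro h
    let pair : Quot (fun x y => y = f x) → Sym2 α :=
      Quot.lift (fun x => s(x, f x)) fun x y hxy => by rw [hxy, hf x, Sym2.eq_swap]
    have hpair : s(a, f a) = s(b, f b) := congrArg pair h
    rcases Sym2.eq_iff.mp hpair with ⟨hab, -⟩ | ⟨hab, -⟩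
    exacts [Or.inl hab, Or.inr hab]
  · rintro (rfl | rfl)
    · rfl
    · exact (Quot.sound (r := fun x y => y = f x) rfl).symm

theorem card_eq_two_mul_card_quot_of_involutive [Finite α] {f : α → α} (hf : f.Involutive)
    (hne : ∀ a, f a ≠ a) : Nat.card α = 2 * Nat.card (Quot fun x y => y = f x) := by
  let orbit : α → Quot (fun x y => y = f x) := Quot.mk _
  have card_fiber (q) : Nat.card {a // orbit a = q} = 2 := by
    induction q using Quot.ind with | _ b
    have fiber_eq : {a | orbit a = orbit b} = {b, f b} :=
      Set.ext fun a => quot_mk_eq_iff_of_involutive hf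
    exact (congrArg Set.ncard fiber_eq).trans (Set.ncard_pair (hne b).symm)
  have := Fintype.ofFinite (Quot fun x y => y = f x)
  rw [← Nat.card_congr (Equiv.sigmaFiberEquiv orbit), Nat.card_sigma,
    Finset.sum_congr rfl fun q _ => card_fiber q, Finset.sum_const, Finset.card_univ,
    Nat.card_eq_fintype_card, smul_eq_mul, mul_comm]

/-- Quotienting first by a relation and then by the map induced by `S` is the same as quotienting
by both identifications at once. -/
def quotQuotMapEquiv (r : α → α → Prop) (S : α → α) (hS : ∀ a b, r a b → r (S a) (S b)) :
    Quot (fun p q : Quot r => q = Quot.map S hS p) ≃ Quot (fun a b => r a b ∨ b = S a) where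
  toFun := Quot.lift (Quot.map id fun _ _ => Or.inl) (by
    rintro ⟨a⟩ _ rfl
    exact Quot.sound (Or.inr rfl))
  invFun := Quot.lift (fun a => Quot.mk _ (Quot.mk r a)) (by
    rintro a b (hab | rfl)
    · rw [Quot.sound hab]
    · exact Quot.sound rfl)
  left_inv := by rintro ⟨⟨a⟩⟩; rfl
  right_inv := by rintro ⟨a⟩; rfl

theorem card_quot_eq_two_mul_card_quot_or {r : α → α → Prop} [Finite (Quot r)] {S : α → α}
    (hS : ∀ a b, r a b → r (S a) (S b)) (hSS : ∀ a, Quot.mk r (S (S a)) = Quot.mk r a)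
    (hne : ∀ a, Quot.mk r (S a) ≠ Quot.mk r a) :
    Nat.card (Quot r) = 2 * Nat.card (Quot fun a b => r a b ∨ b = S a) := by
  have involutive_map : (Quot.map S hS).Involutive := by rintro ⟨a⟩; exact hSS a
  have map_ne (q : Quot r) : Quot.map S hS q ≠ q := by induction q using Quot.ind; exact hne _
  rw [card_eq_two_mul_card_quot_of_involutive involutive_map map_ne,
    Nat.card_congr (quotQuotMapEquiv r S hS)]

theorem numClasses_eq_two_mul_numClasses_pair {n : ℕ} {s : Set (Perm (Fin (2 * n)))}
    {T : Perm (Perm (Fin (2 * n)))} {S : Perm (Fin (2 * n)) → Perm (Fin (2 * n))}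
    (hS : Set.MapsTo S s s) (hST : ∀ σ ∈ s, S (T σ) = T (S σ))
    (hTSS : ∀ σ ∈ s, T (S (S σ)) = σ) (hne : ∀ σ ∈ s, ¬ T.SameCycle σ (S σ)) :
    numClasses n s {⇑T} = 2 * numClasses n s {⇑T, S} := by
  let r : s → s → Prop := fun a b => b.1 = T a.1
  let cycle : Quot r → Quotient (Perm.SameCycle.setoid T) :=
    Quot.lift (fun a => Quotient.mk _ a.1) fun a b hab =>
      Quotient.sound (hab ▸ Perm.sameCycle_apply_right.mpr (Perm.SameCycle.refl T a.1))
  have key := card_quot_eq_two_mul_card_quot_or (r := r) (S := hS.restrict S s s)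
    (fun a b hab => (congrArg S hab).trans (hST a.1 a.2))
    (fun a => Quot.sound (hTSS a.1 a.2).symm)
    (fun a ha => hne a.1 a.2 (Quotient.exact (congrArg cycle ha.symm)))
  simpa only [numClasses, Set.mem_singleton_iff, Set.mem_insert_iff, exists_eq_left,
    exists_eq_or_imp, r, Subtype.ext_iff, Set.MapsTo.val_restrict_apply] using key

end Counting

theorem sq_eq_of_inv_mul_mul_inv_eq_conj {G : Type*} [Group G] {b c x : G} {k : ℤ}
    (h : b⁻¹ * c * x⁻¹ = b ^ k * x * (b ^ k)⁻¹) :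
    (b ^ (-k) * x) ^ 2 = b ^ (-(2 * k + 1)) * c := by
  have hc : c = b * (b ^ k * x * (b ^ k)⁻¹) * x := by rw [← h]; group
  rw [hc, pow_two]
  group

section Rotation

variable (n : ℕ)

theorem val_rho (x : Fin (2 * n)) :
    (rho n x).val = if x.val % 2 = 0 then x.val + 1 else x.val - 1 := rfl

theorem rho_mul_self : rho n * rho n = 1 := by
  ext x
  simp only [Perm.mul_apply, val_rho, Perm.one_apply]
  split_ifs <;> omega

theorem rho_inv : (rho n)⁻¹ = rho n :=
  inv_eq_of_mul_eq_one_left (rho_mul_self n)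

theorem rho_apply_ne (x : Fin (2 * n)) : rho n x ≠ x := by
  simp only [ne_eq, Fin.ext_iff, val_rho]
  split_ifs <;> omega

theorem sign_rho : Perm.sign (rho n) = (-1) ^ n := by
  have rho_sq : rho n ^ 2 = 1 := (pow_two _).trans (rho_mul_self n)
  have no_fixedPoints : Fintype.card (Function.fixedPoints (rho n)) = 0 :=
    Fintype.card_eq_zero_iff.mpr ⟨fun x => rho_apply_ne n x x.2⟩
  rw [Perm.sign_of_pow_two_eq_one rho_sq, no_fixedPoints, Fintype.card_fin, Nat.sub_zero,
    Nat.mul_div_cancel_left n two_pos]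

theorem val_finRotate (i : Fin n) : (finRotate n i).val = (i.val + 1) % n := by
  have := i.neZero
  rw [finRotate_apply, Fin.val_add, Fin.val_one', Nat.add_mod_mod]

theorem val_finRotate_sq (x : Fin (2 * n)) :
    ((finRotate (2 * n) ^ 2) x).val =
      if x.val + 2 < 2 * n then x.val + 2 else x.val + 2 - 2 * n := by
  have hx := x.isLt
  rw [pow_two, Perm.mul_apply, val_finRotate, val_finRotate, Nat.mod_add_mod]
  split_ifs with h
  · exact Nat.mod_eq_of_lt h
  · rw [Nat.mod_eq_sub_mod (by omega), Nat.mod_eq_of_lt (by omega)]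

theorem commute_finRotate_sq_rho : Commute (finRotate (2 * n) ^ 2) (rho n) := by
  ext x
  have hx := x.isLt
  simp only [Perm.mul_apply, val_rho, val_finRotate_sq]
  split_ifs <;> omega

end Rotation

section SignedPermutations

variable (n : ℕ)

/-- The permutation `ρ` as an element of its own centralizer. -/
def rhoInCentralizer : Subgroup.centralizer {rho n} :=
  ⟨rho n, Subgroup.mem_centralizer_singleton_iff.mpr rfl⟩

/-- The permutation `β²` as an element of the centralizer of `ρ`. -/
def rotateSq : Subgroup.centralizer {rho n} :=
  ⟨finRotate (2 * n) ^ 2,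
    Subgroup.mem_centralizer_singleton_iff.mpr (commute_finRotate_sq_rho n).eq⟩

/-- The index `i` of the orbit `{2i, 2i+1}` of `ρ` that contains a given point. -/
def block (x : Fin (2 * n)) : Fin n := ⟨x.val / 2, by omega⟩

/-- The even representative `2i` of the block `i`. -/
def evenPoint (i : Fin n) : Fin (2 * n) := ⟨2 * i.val, by omega⟩

theorem block_evenPoint (i : Fin n) : block n (evenPoint n i) = i := by
  simp [block, evenPoint]

variable {n}

theorem block_eq_block_iff {x y : Fin (2 * n)} : block n x = block n y ↔ x = y ∨ x = rho n y := by
  simp only [block, Fin.ext_iff, val_rho]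
  split_ifs <;> omega

theorem block_rho (x : Fin (2 * n)) : block n (rho n x) = block n x :=
  block_eq_block_iff.mpr (Or.inr rfl)

theorem block_apply_eq_of_block_eq (τ : Subgroup.centralizer {rho n}) {x y : Fin (2 * n)}
    (hxy : block n x = block n y) : block n (τ.1 x) = block n (τ.1 y) := by
  rcases block_eq_block_iff.mp hxy with rfl | rfl
  · rfl
  · have τ_rho : τ.1 (rho n y) = rho n (τ.1 y) :=
      Perm.congr_fun (Subgroup.mem_centralizer_singleton_iff.mp τ.2) y
    rw [τ_rho, block_rho]

variable (n)

/-- The action of the centralizer of `ρ` on the `n` blocks `{2i, 2i+1}`, obtained by forgetting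
the signs of a signed permutation. -/
def blockPerm : Subgroup.centralizer {rho n} →* Perm (Fin n) :=
  MonoidHom.toHomPerm
    { toFun := fun τ i => block n (τ.1 (evenPoint n i))
      map_one' := funext (block_evenPoint n)
      map_mul' := fun τ υ => funext fun i =>
        block_apply_eq_of_block_eq τ (block_evenPoint n (block n (υ.1 (evenPoint n i)))).symm }

theorem blockPerm_apply (τ : Subgroup.centralizer {rho n}) (i : Fin n) :
    blockPerm n τ i = block n (τ.1 (evenPoint n i)) := rfl

theorem blockPerm_rho : blockPerm n (rhoInCentralizer n) = 1 := by
  ext1 i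
  rw [blockPerm_apply, rhoInCentralizer, block_rho, block_evenPoint, Perm.one_apply]

theorem blockPerm_rotateSq : blockPerm n (rotateSq n) = finRotate n := by
  ext i
  have hi := i.isLt
  rw [blockPerm_apply, val_finRotate]
  simp only [rotateSq, block, val_finRotate_sq, evenPoint]
  split_ifs with h
  · rw [Nat.mod_eq_of_lt (by omega)]
    omega
  · rw [show i.val + 1 = n by omega, Nat.mod_self]
    omega

/-- The determinant of an element of the centralizer of `ρ`, viewed as a signed permutation matrix
of size `n`. Each sign `-1` is a transposition of two points of a block, and permuting whole
blocks is even, hence the product of the signs is the sign as a permutation of `Fin (2 * n)`. -/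
def signedDet : Subgroup.centralizer {rho n} →* ℤˣ :=
  Perm.sign.comp (Subgroup.subtype _) * Perm.sign.comp (blockPerm n)

theorem signedDet_apply (τ : Subgroup.centralizer {rho n}) :
    signedDet n τ = Perm.sign τ.1 * Perm.sign (blockPerm n τ) := rfl

theorem signedDet_rho : signedDet n (rhoInCentralizer n) = (-1) ^ n := by
  rw [signedDet_apply, blockPerm_rho, map_one, mul_one, rhoInCentralizer, sign_rho]

theorem signedDet_rotateSq : signedDet n (rotateSq n) = (-1) ^ (n - 1) := by
  rw [signedDet_apply, blockPerm_rotateSq, sign_finRotate, rotateSq, map_pow, Int.units_sq, one_mul]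

variable {n}

theorem signedDet_rotateSq_zpow_mul_rho (hn : 1 ≤ n) {m : ℤ} (hm : Odd m) :
    signedDet n (rotateSq n ^ m * rhoInCentralizer n) = -1 := by
  have hdet : signedDet n (rotateSq n) ^ m = (-1) ^ (n - 1) := by
    obtain ⟨j, rfl⟩ := hm
    rw [signedDet_rotateSq, zpow_add_one, zpow_mul, zpow_ofNat, Int.units_sq, one_zpow, one_mul]
  rw [map_mul, map_zpow, hdet, signedDet_rho, ← pow_add]
  exact Odd.neg_one_pow ⟨n - 1, by omega⟩

theorem sq_ne_rotateSq_zpow_mul_rho (hn : 1 ≤ n) {m : ℤ} (hm : Odd m)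
    (τ : Subgroup.centralizer {rho n}) : τ ^ 2 ≠ rotateSq n ^ m * rhoInCentralizer n := by
  intro h
  have hdet := congrArg (signedDet n) h
  rw [map_pow, Int.units_sq, signedDet_rotateSq_zpow_mul_rho hn hm] at hdet
  exact absurd hdet (by decide)

end SignedPermutations

section Swap

variable (n : ℕ)

theorem swapMap_conjB2 (σ : Perm (Fin (2 * n))) :
    swapMap n (conjB2 n σ) = conjB2 n (swapMap n σ) := by
  have hc := (commute_finRotate_sq_rho n).eq
  unfold conjB2 swapMap
  generalize finRotate (2 * n) = β at hc ⊢
  calc β⁻¹ * rho n * (β ^ 2 * σ * (β ^ 2)⁻¹)⁻¹ * β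
      = β⁻¹ * (rho n * β ^ 2) * σ⁻¹ * β * (β ^ 2)⁻¹ := by group
    _ = β ^ 2 * (β⁻¹ * rho n * σ⁻¹ * β) * (β ^ 2)⁻¹ := by rw [← hc]; group

/-- Conjugation by `β²` as a permutation of the symmetric group, so that its integer powers and its
cycles make sense. -/
def conjB2Perm : Perm (Perm (Fin (2 * n))) :=
  MulAut.toPerm _ (MulAut.conj (finRotate (2 * n) ^ 2))

theorem coe_conjB2Perm : ⇑(conjB2Perm n) = conjB2 n := rfl

variable {n}

theorem conjB2Perm_zpow_finRotate_mul (ξ : Subgroup.centralizer {rho n}) (k : ℤ) :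
    (conjB2Perm n ^ k) (finRotate (2 * n) * ξ) =
      finRotate (2 * n) * ↑(rotateSq n ^ k * ξ * (rotateSq n ^ k)⁻¹) := by
  have conj_zpow (σ : Perm (Fin (2 * n))) : (conjB2Perm n ^ k) σ =
      (finRotate (2 * n) ^ 2) ^ k * σ * ((finRotate (2 * n) ^ 2) ^ k)⁻¹ := by
    rw [conjB2Perm, ← map_zpow, ← map_zpow]
    rfl
  rw [conj_zpow]
  simp only [rotateSq, Subgroup.coe_mul, Subgroup.coe_inv, Subgroup.coe_zpow]
  group

theorem swapMap_finRotate_mul (ξ : Subgroup.centralizer {rho n}) :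
    swapMap n (finRotate (2 * n) * ξ) =
      finRotate (2 * n) * ↑((rotateSq n)⁻¹ * rhoInCentralizer n * ξ⁻¹) := by
  simp only [swapMap, rotateSq, rhoInCentralizer, Subgroup.coe_mul, Subgroup.coe_inv]
  group

theorem not_sameCycle_conjB2Perm_swapMap (hn : 1 ≤ n) (ξ : Subgroup.centralizer {rho n}) :
    ¬ (conjB2Perm n).SameCycle (finRotate (2 * n) * ξ) (swapMap n (finRotate (2 * n) * ξ)) := by
  rintro ⟨k, hk⟩
  rw [conjB2Perm_zpow_finRotate_mul, swapMap_finRotate_mul, mul_right_inj, Subtype.coe_inj] at hk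
  exact sq_ne_rotateSq_zpow_mul_rho hn ⟨-k - 1, by ring⟩ _
    (sq_eq_of_inv_mul_mul_inv_eq_conj hk.symm)

theorem conjB2_swapMap_swapMap (ξ : Subgroup.centralizer {rho n}) :
    conjB2 n (swapMap n (swapMap n (finRotate (2 * n) * ξ))) = finRotate (2 * n) * ξ := by
  have ξ_comm : ξ * rhoInCentralizer n = rhoInCentralizer n * ξ :=
    Subtype.ext (Subgroup.mem_centralizer_singleton_iff.mp ξ.2)
  rw [swapMap_finRotate_mul, swapMap_finRotate_mul, ← coe_conjB2Perm, ← zpow_one (conjB2Perm n),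
    conjB2Perm_zpow_finRotate_mul, mul_right_inj, Subtype.coe_inj]
  generalize rotateSq n = b
  generalize rhoInCentralizer n = r at ξ_comm ⊢
  calc b ^ (1 : ℤ) * (b⁻¹ * r * (b⁻¹ * r * ξ⁻¹)⁻¹) * (b ^ (1 : ℤ))⁻¹ = r * ξ * r⁻¹ := by group
    _ = ξ := by rw [← ξ_comm, mul_inv_cancel_right]

end Swap

section Genus

variable {n : ℕ}

theorem numCycles_conj (τ σ : Perm (Fin (2 * n))) :
    numCycles n (τ * σ * τ⁻¹) = numCycles n σ := by
  simp only [numCycles, Perm.cycleType_conj, Perm.card_support_conj]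

theorem numCycles_inv (σ : Perm (Fin (2 * n))) : numCycles n σ⁻¹ = numCycles n σ := by
  simp only [numCycles, Perm.cycleType_inv, Perm.support_inv]

theorem numCycles_swapMap (σ : Perm (Fin (2 * n))) :
    numCycles n (swapMap n σ) = numCycles n (σ * rho n) := by
  have swapMap_eq : swapMap n σ =
      (finRotate (2 * n))⁻¹ * (σ * rho n)⁻¹ * ((finRotate (2 * n))⁻¹)⁻¹ := by
    rw [mul_inv_rev, rho_inv, inv_inv, ← mul_assoc, swapMap]
  rw [swapMap_eq, numCycles_conj, numCycles_inv]

theorem numCycles_swapMap_mul_rho (ξ : Subgroup.centralizer {rho n}) :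
    numCycles n (swapMap n (finRotate (2 * n) * ξ) * rho n) =
      numCycles n (finRotate (2 * n) * ξ) := by
  rw [← numCycles_swapMap, ← numCycles_conj (finRotate (2 * n) ^ 2)]
  exact congrArg (numCycles n) (conjB2_swapMap_swapMap ξ)

theorem mapsTo_swapMap_Ugen (g : ℕ) : Set.MapsTo (swapMap n) (Ugen n g) (Ugen n g) := by
  rintro _ ⟨⟨ξ, hξ, rfl⟩, hgenus⟩
  lift ξ to Subgroup.centralizer {rho n} using hξ
  refine ⟨⟨_, Subtype.coe_prop _, swapMap_finRotate_mul ξ⟩, ?_⟩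
  rwa [numCycles_swapMap, numCycles_swapMap_mul_rho, add_comm (numCycles n (_ * rho n))]

end Genus

/-- Theorem 4, relation `|OOc| = 2·|OOb|`: for every genus, the number of classes of
`U_g` under conjugation by `β²` is twice the number of classes under conjugation by
`β²` together with the swap. -/
theorem OOc_eq_two_mul_OOb (n : ℕ) (hn : 1 ≤ n) (g : ℕ) :
    numClasses n (Ugen n g) {conjB2 n}
      = 2 * numClasses n (Ugen n g) {conjB2 n, swapMap n} := by
  rw [← coe_conjB2Perm]
  refine numClasses_eq_two_mul_numClasses_pair (mapsTo_swapMap_Ugen g)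
    (fun σ _ => swapMap_conjB2 n σ) ?_ ?_
  · rintro _ ⟨⟨ξ, hξ, rfl⟩, -⟩
    exact conjB2_swapMap_swapMap ⟨ξ, hξ⟩
  · rintro _ ⟨⟨ξ, hξ, rfl⟩, -⟩
    exact not_sameCycle_conjB2Perm_swapMap hn ⟨ξ, hξ⟩
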